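/- Let A be a densely defined closed operator on a complex Hilbert space H with closed range. Then R(A) = R(A*) if and only if the closure of the carrier C(A) = D(A) ∩ N(A)⊥ equals R(A). -/

import Mathlib

open scoped InnerProductSpace
open LinearPMap

noncomputable section

variable {H : Type*} [NormedAddCommGroup H] [InnerProductSpace ℂ H] [CompleteSpace H]

/-- The range `R(A)` of a partially defined operator, as a submodule of `H`. -/
def LinearPMap.ran (A : H →ₗ.[ℂ] H) : Submodule ℂ H :=
  LinearMap.range A.toFun

/-- The null space `N(A)` of a partially defined operator, as a submodule of `H`. -/
def LinearPMap.nul (A : H →ₗ.[ℂ] H) : Submodule ℂ H :=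
  (LinearMap.ker A.toFun).map A.domain.subtype

theorem aux_mem_nul (A : H →ₗ.[ℂ] H) (x : H) : x ∈ A.nul ↔ (x, (0 : H)) ∈ A.graph := by
  rw [LinearPMap.mem_graph_iff]
  simp only [LinearPMap.nul, Submodule.mem_map, LinearMap.mem_ker]
  constructor
  · rintro ⟨y, hy, rfl⟩
    exact ⟨y, rfl, hy⟩
  · rintro ⟨y, hy, h⟩
    exact ⟨y, h, hy⟩

theorem aux_nul_closed (A : H →ₗ.[ℂ] H) (hc : A.IsClosed) : IsClosed (A.nul : Set H) := by
  have h : (A.nul : Set H) = (fun x : H => (x, (0 : H))) ⁻¹' (A.graph : Set (H × H)) := by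
    ext x
    exact aux_mem_nul A x
  rw [h]
  exact IsClosed.preimage (by fun_prop) hc

theorem aux_carrier (A : H →ₗ.[ℂ] H) (hd : Dense (A.domain : Set H)) (hc : A.IsClosed) :
    (A.domain ⊓ A.nulᗮ).topologicalClosure = A.nulᗮ := by
  have hN := aux_nul_closed A hc
  have : CompleteSpace A.nul := hN.completeSpace_coe
  apply le_antisymm
  · exact Submodule.topologicalClosure_minimal _ inf_le_right (Submodule.isClosed_orthogonal _)
  · intro z hz
    have hnd : A.nul ≤ A.domain := by
      rintro x ⟨y, -, rfl⟩
      exact y.2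
    have hcont : Continuous (fun d : H => d - A.nul.starProjection d) := by fun_prop
    have hm : Set.MapsTo (fun d : H => d - A.nul.starProjection d) (A.domain : Set H)
        ((A.domain ⊓ A.nulᗮ : Submodule ℂ H) : Set H) := by
      intro d hd'
      refine ⟨A.domain.sub_mem hd' (hnd ?_), ?_⟩
      · exact Submodule.starProjection_apply_mem _ _
      · exact Submodule.sub_starProjection_mem_orthogonal _
    have h1 := map_mem_closure hcont (hd z) hm
    have h2 : A.nul.starProjection z = 0 := by
      rw [Submodule.starProjection_apply_eq_zero_iff]
      exact hz
    simp only [h2, sub_zero] at h1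
    exact h1

theorem aux_range (A : H →ₗ.[ℂ] H) (hd : Dense (A.domain : Set H)) (hc : A.IsClosed)
    (hr : IsClosed (A.ran : Set H)) : A.adjoint.ran = A.nulᗮ := by
  apply le_antisymm
  · rintro _ ⟨y, rfl⟩
    rw [Submodule.mem_orthogonal']
    rintro _ ⟨x, hx, rfl⟩
    have h := LinearPMap.adjoint_isFormalAdjoint hd y x
    have hx' : A x = 0 := hx
    rw [hx', inner_zero_right] at h
    exact h
  · intro w hw
    have : CompleteSpace A.graph := hc.completeSpace_coe
    have : CompleteSpace A.ran := hr.completeSpace_coe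
    have hmem : ∀ p : A.graph, (p : H × H).2 ∈ A.ran := by
      intro p
      obtain ⟨y, -, h2⟩ := (LinearPMap.mem_graph_iff _).1 p.2
      exact ⟨y, h2⟩
    let π : A.graph →L[ℂ] A.ran :=
      ((ContinuousLinearMap.snd ℂ H H).comp A.graph.subtypeL).codRestrict A.ran hmem
    have hπ : Function.Surjective π := by
      rintro ⟨_, y, rfl⟩
      exact ⟨⟨((y : H), A y), LinearPMap.mem_graph _ y⟩, rfl⟩
    obtain ⟨C, hC, hpre⟩ := π.exists_preimage_norm_le hπ
    let f : A.graph →L[ℂ] ℂ :=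
      (innerSL ℂ w).comp ((ContinuousLinearMap.fst ℂ H H).comp A.graph.subtypeL)
    have hker : ∀ p : A.graph, π p = 0 → f p = 0 := by
      rintro ⟨⟨x, r⟩, hp⟩ h
      have h0 : r = 0 := congrArg Subtype.val h
      subst h0
      exact (Submodule.mem_orthogonal' _ _).1 hw x ((aux_mem_nul A x).2 hp)
    have heq : ∀ p q : A.graph, π p = π q → f p = f q := by
      intro p q h
      have := hker (p - q) (by rw [_root_.map_sub, h, sub_self])
      rwa [_root_.map_sub, sub_eq_zero] at this
    obtain ⟨s, hs⟩ := π.toLinearMap.exists_rightInverse_of_surjective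
      (LinearMap.range_eq_top.2 hπ)
    have hs' : ∀ r, π (s r) = r := fun r => LinearMap.congr_fun hs r
    let g : A.ran →L[ℂ] ℂ := (f.toLinearMap.comp s).mkContinuous (‖f‖ * C) (by
      intro r
      obtain ⟨p, hp, hpn⟩ := hpre r
      have : f (s r) = f p := heq _ _ (by rw [hs', hp])
      change ‖f (s r)‖ ≤ _
      rw [this, mul_assoc]
      exact (f.le_opNorm p).trans (by gcongr))
    let y : A.ran := (InnerProductSpace.toDual ℂ A.ran).symm g
    have key : ∀ x : A.domain, ⟪w, (x : H)⟫_ℂ = ⟪(y : H), A x⟫_ℂ := by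
      intro x
      have h1 : ⟪y, (⟨A x, x, rfl⟩ : A.ran)⟫_ℂ = g ⟨A x, x, rfl⟩ :=
        InnerProductSpace.toDual_symm_apply
      have h2 : g ⟨A x, x, rfl⟩ = f ⟨((x : H), A x), LinearPMap.mem_graph _ x⟩ :=
        heq _ _ (by rw [hs']; rfl)
      exact (h1.trans h2).symm
    have hy : (y : H) ∈ A.adjoint.domain := LinearPMap.mem_adjoint_domain_of_exists _ ⟨w, key⟩
    exact ⟨⟨y, hy⟩, LinearPMap.adjoint_apply_eq hd ⟨y, hy⟩ key⟩

/-- Let `A` be a densely defined closed operator on a complex Hilbert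
space `H` with closed range. Then `R(A) = R(A*)` if and only if the closure of the
carrier `C(A) = D(A) ⊓ N(A)ᗮ` equals `R(A)`. -/
theorem stmt2 (A : H →ₗ.[ℂ] H) (hd : Dense (A.domain : Set H)) (hc : A.IsClosed)
    (hr : IsClosed (A.ran : Set H)) :
    A.ran = A.adjoint.ran ↔ (A.domain ⊓ A.nulᗮ).topologicalClosure = A.ran := by
  rw [aux_range A hd hc hr, aux_carrier A hd hc]
  exact eq_comm
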